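/- arXiv:2601.03208 — 3 statements merged into one kernel-verified Lean document; each statement's English description precedes it below -/
import Mathlib

section
/- Let I be a monomial ideal of R = K[x_1,…,x_n] that is not a principal ideal. Then depth(R/I) = depth(R/sgn(I)). -/
open MvPolynomial

/-- The monomial ideal of `R = K[x_1,…,x_n]` generated by the monomials `x^{v j}`,
`j = 1, …, q`, with exponent vectors `v j ∈ ℕ^n`. -/
noncomputable def monIdeal (K : Type) [Field K] {n q : ℕ} (v : Fin q → Fin n →₀ ℕ) :
    Ideal (MvPolynomial (Fin n) K) :=
  Ideal.span (Set.range fun j => monomial (v j) (1 : K))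

/-- The exponent vectors `v j` are pairwise non-comparable in the componentwise order,
i.e. the corresponding monomials form an anti-chain under divisibility.  Equivalently,
`{x^{v j}}` is the (unique) minimal monomial generating set `G(I)` of the monomial ideal
`I` it generates. -/
def AntichainFam {n q : ℕ} (v : Fin q → Fin n →₀ ℕ) : Prop :=
  ∀ j k : Fin q, v j ≤ v k → j = k

/-- The signature of the family `v` of exponent vectors (the columns of the incidence
matrix `A`): for each row `i`, the `(i,j)` entry of the signature matrix is the position
of `A i j = v j i` in the ascending list of the distinct entries of the `i`-th row of `A`,
i.e. the number of distinct values in row `i` that are strictly smaller than `v j i`.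
The columns of the resulting matrix are the exponent vectors of the generators of the
signature ideal `sgn(I) = monIdeal K (sgnExp v)`. -/
noncomputable def sgnExp {n q : ℕ} (v : Fin q → Fin n →₀ ℕ) : Fin q → Fin n →₀ ℕ :=
  fun j => Finsupp.equivFunOnFinite.symm fun i =>
    ((Finset.univ.image fun k : Fin q => v k i).filter fun m => m < v j i).card

/-- The graded maximal ideal `(x_1, …, x_n)` of `K[x_1,…,x_n]`. -/
noncomputable def mIdeal (K : Type) [Field K] (n : ℕ) : Ideal (MvPolynomial (Fin n) K) :=
  Ideal.span (Set.range (X : Fin n → MvPolynomial (Fin n) K))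

/-- The depth of `R/I` with respect to the maximal ideal `(x_1, …, x_n)`: the largest
length of an `R/I`-regular sequence consisting of elements of `(x_1, …, x_n)`. -/
noncomputable def depthQuot (K : Type) [Field K] (n : ℕ)
    (I : Ideal (MvPolynomial (Fin n) K)) : ℕ :=
  sSup { k : ℕ | ∃ rs : List (MvPolynomial (Fin n) K), rs.length = k ∧
    (∀ r ∈ rs, r ∈ mIdeal K n) ∧
    RingTheory.Sequence.IsRegular (MvPolynomial (Fin n) K ⧸ I) rs }

/-!
By Rees' theorem, `M` has depth at least `d` with respect to `m` iff `Ext^k(R/m, M) = 0` for all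
`k < d`. For a submodule `A` of `M` and an `A`-regular `c`, the short exact sequence
`0 → A → M → M/cA → 0`, whose first map is multiplication by `c`, computes the vanishing of
`Ext^k(R/m, M/cA)` independently of `c` in two situations: if `c ∈ m`, because then `c` kills
`Ext^k(R/m, A) → Ext^k(R/m, M)`; and if `Ext^k(R/m, M)` and `Ext^{k+1}(R/m, M)` vanish.

Suppose that row `i` of the incidence matrix misses the value `t` but has larger entries, and write
`x_i = X i`. If `t > 0`, then `I = B + x_i^2 A`, where `B` is generated by the generators with
`i`-th exponent below `t`; these exponents do not exceed those of the generators of `A`, so `x_i` is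
regular on `(A + B)/B`, and the first situation, with `M = R/B`, allows us to replace `x_i^2` by
`x_i`. If `t = 0`, then `I = x_i A`, where `A` is proper because `I` is not principal. Since `R` has
depth `n` and `R/A`, `R/I` have smaller depth, the second situation, with `M = R`, allows us to
replace `x_i` by `1`. Both moves preserve the signature and lower the exponents above `t` in row `i`
by one. A matrix without such gaps is its own signature.
-/

open CategoryTheory Abelian RingTheory.Sequence
open scoped Pointwise

universe u v w

section Ext

theorem subsingleton_ext_X₃_iff {C : Type u} [Category.{v} C] [Abelian C] [HasExt.{w} C]
    {S : ShortComplex C} (hS : S.ShortExact) (N : C) (k : ℕ) :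
    Subsingleton (Ext N S.X₃ k) ↔
      (∀ e : Ext N S.X₂ k, ∃ a : Ext N S.X₁ k, a.comp (Ext.mk₀ S.f) (add_zero k) = e) ∧
        ∀ a : Ext N S.X₁ (k + 1), a.comp (Ext.mk₀ S.f) (add_zero _) = 0 → a = 0 := by
  refine ⟨fun h => ⟨fun e => ?_, fun a ha => ?_⟩,
    fun ⟨surj, inj⟩ => subsingleton_of_forall_eq 0 fun e => ?_⟩
  · exact Ext.covariant_sequence_exact₂ N hS e (h.elim _ _)
  · obtain ⟨e, rfl⟩ := Ext.covariant_sequence_exact₁ N hS a ha rfl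
    rw [h.elim e 0, Ext.zero_comp]
  · obtain ⟨e, rfl⟩ := Ext.covariant_sequence_exact₃ N hS e rfl
      (inj _ (by rw [Ext.comp_assoc_of_third_deg_zero, hS.extClass_comp, Ext.comp_zero]))
    obtain ⟨a, rfl⟩ := surj e
    rw [Ext.comp_assoc_of_third_deg_zero, Ext.mk₀_comp_mk₀, S.zero, Ext.mk₀_zero, Ext.comp_zero]

variable {R : Type u} [CommRing R] {M : Type u} [AddCommGroup M] [Module R M]
  {N : ModuleCat.{u} R} {A : Submodule R M} {c : R} {k : ℕ}

/-- The complex `A → M → M ⧸ c • A` whose first map is `a ↦ c • a`, for a submodule `A` of `M`.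
For varying `c`, only the maps and the third term change. -/
noncomputable def smulSubmoduleComplex (c : R) (A : Submodule R M) :
    ShortComplex (ModuleCat.{u} R) :=
  ModuleCat.shortComplexOfCompEqZero (c • A.subtype) (c • A).mkQ <| LinearMap.ext fun a =>
    (Submodule.Quotient.mk_eq_zero _).2 (Submodule.smul_mem_pointwise_smul (a : M) c A a.2)

theorem smulSubmoduleComplex_shortExact (hc : IsSMulRegular A c) :
    (smulSubmoduleComplex c A).ShortExact := by
  have range_eq : LinearMap.range (c • A.subtype) = c • A := by
    ext x
    simp [Submodule.mem_smul_pointwise_iff_exists]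
  have exact : Function.Exact (c • A.subtype) (c • A).mkQ := by
    rw [LinearMap.exact_iff, Submodule.ker_mkQ, range_eq]
  exact ModuleCat.shortComplex_shortExact _ exact (fun a b hab => hc (Subtype.ext hab))
    (Submodule.mkQ_surjective _)

theorem ext_smul_eq_zero (hN : c ∈ Module.annihilator R N) {L : ModuleCat.{u} R}
    (e : Ext N L k) : c • e = 0 := by
  have h : c • 𝟙 N = 0 := by
    rw [← ModuleCat.lsmul_eq_smul_id, Module.mem_annihilator_iff_lsmul_eq_zero.mp hN]
    rfl
  calc c • e = (Ext.mk₀ (c • 𝟙 N)).comp e (zero_add k) := by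
        rw [Ext.mk₀_smul, Ext.smul_comp, Ext.mk₀_id_comp]
    _ = 0 := by rw [h, Ext.mk₀_zero, Ext.zero_comp]

theorem ext_comp_smulSubmoduleComplex_f_eq_zero (hN : c ∈ Module.annihilator R N)
    (e : Ext N (ModuleCat.of R A) k) :
    e.comp (Ext.mk₀ (smulSubmoduleComplex c A).f) (add_zero k) = 0 :=
  calc
    _ = e.comp (c • Ext.mk₀ (ModuleCat.ofHom A.subtype)) (add_zero k) := by
      rw [← Ext.mk₀_smul]; rfl
    _ = 0 := by rw [Ext.comp_smul, ext_smul_eq_zero hN]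

theorem subsingleton_ext_quotient_smul_iff_of_mem_annihilator
    (hN : c ∈ Module.annihilator R N) (hc : IsSMulRegular A c) :
    Subsingleton (Ext N (ModuleCat.of R (M ⧸ c • A)) k) ↔
      Subsingleton (Ext N (ModuleCat.of R M) k) ∧
        Subsingleton (Ext N (ModuleCat.of R A) (k + 1)) := by
  refine (subsingleton_ext_X₃_iff (smulSubmoduleComplex_shortExact hc) N k).trans
    (and_congr ⟨fun h => subsingleton_of_forall_eq 0 fun e => ?_, fun h e => ⟨0, h.elim _ _⟩⟩
      ⟨fun h => subsingleton_of_forall_eq 0 fun a => ?_, fun h a _ => h.elim a 0⟩)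
  · obtain ⟨a, rfl⟩ := h e
    exact ext_comp_smulSubmoduleComplex_f_eq_zero hN a
  · exact h a (ext_comp_smulSubmoduleComplex_f_eq_zero hN a)

theorem subsingleton_ext_quotient_smul_iff_of_subsingleton_ext (hc : IsSMulRegular A c)
    (hM : Subsingleton (Ext N (ModuleCat.of R M) k))
    (hM' : Subsingleton (Ext N (ModuleCat.of R M) (k + 1))) :
    Subsingleton (Ext N (ModuleCat.of R (M ⧸ c • A)) k) ↔
      Subsingleton (Ext N (ModuleCat.of R A) (k + 1)) :=
  (subsingleton_ext_X₃_iff (smulSubmoduleComplex_shortExact hc) N k).trans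
    ⟨fun h => subsingleton_of_forall_eq 0 fun a => h.2 a (hM'.elim _ _),
      fun h => ⟨fun _ => ⟨0, hM.elim _ _⟩, fun a _ => h.elim a 0⟩⟩

end Ext

section Depth
variable {R : Type u} [CommRing R]

/-- There is an `M`-regular sequence of length `d` consisting of elements of `m`, that is,
`M` has depth at least `d` with respect to `m`. -/
def HasRegularSequence (m : Ideal R) (M : Type*) [AddCommGroup M] [Module R M] (d : ℕ) : Prop :=
  ∃ rs : List R, rs.length = d ∧ (∀ r ∈ rs, r ∈ m) ∧ IsRegular M rs

theorem hasRegularSequence_congr {M M' : Type*} [AddCommGroup M] [Module R M] [AddCommGroup M']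
    [Module R M'] (e : M ≃ₗ[R] M') (m : Ideal R) (d : ℕ) :
    HasRegularSequence m M d ↔ HasRegularSequence m M' d := by
  simp only [HasRegularSequence, e.isRegular_congr]

theorem smul_top_quotient_lt_top {M : Type*} [AddCommGroup M] [Module R M] {m : Ideal R}
    {A : Submodule R M} (hM : m • (⊤ : Submodule R M) < ⊤) (hA : A ≤ m • ⊤) :
    m • (⊤ : Submodule R (M ⧸ A)) < ⊤ := by
  have map_smul_top : m • (⊤ : Submodule R (M ⧸ A)) = (m • ⊤ : Submodule R M).map A.mkQ := by
    rw [Submodule.map_smul'', Submodule.map_top, Submodule.range_mkQ]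
  rw [lt_top_iff_ne_top, map_smul_top,
    ← (Submodule.comap_injective_of_surjective A.mkQ_surjective).ne_iff,
    Submodule.comap_map_mkQ, sup_eq_right.2 hA]
  exact hM.ne

theorem hasRegularSequence_iff_subsingleton_ext [IsNoetherianRing R] {m : Ideal R}
    {M : Type u} [AddCommGroup M] [Module R M] [Module.Finite R M]
    (hM : m • (⊤ : Submodule R M) < ⊤) {d : ℕ} :
    HasRegularSequence m M d ↔
      ∀ k < d, Subsingleton (Ext (ModuleCat.of R (R ⧸ m)) (ModuleCat.of R M) k) := by
  have support_eq : Module.support R (ModuleCat.of R (R ⧸ m)) = PrimeSpectrum.zeroLocus m := by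
    change Module.support R (R ⧸ m) = _
    rw [Module.support_eq_zeroLocus, Ideal.annihilator_quotient]
  refine ⟨?_, ModuleCat.exists_isRegular_of_exists_subsingleton_ext m d (.of R M) hM
    (.of R (R ⧸ m)) support_eq⟩
  rintro ⟨rs, rfl, mem, reg⟩
  exact ModuleCat.subsingleton_ext_of_exists_isRegular m (.of R (R ⧸ m)) support_eq.le
    (.of R M) hM rs mem reg

section Quotient
variable [IsNoetherianRing R] {m : Ideal R} {M : Type u} [AddCommGroup M] [Module R M]
  [Module.Finite R M] {A : Submodule R M} {c : R} {d : ℕ}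

theorem hasRegularSequence_quotient_smul_iff_of_mem (hM : m • (⊤ : Submodule R M) < ⊤)
    (hc : c ∈ m) (hcA : IsSMulRegular A c) :
    HasRegularSequence m (M ⧸ c • A) d ↔
      ∀ k < d, Subsingleton (Ext (ModuleCat.of R (R ⧸ m)) (ModuleCat.of R M) k) ∧
        Subsingleton (Ext (ModuleCat.of R (R ⧸ m)) (ModuleCat.of R A) (k + 1)) := by
  have smul_le : c • A ≤ m • ⊤ := by
    rintro _ ⟨a, -, rfl⟩
    exact Submodule.smul_mem_smul hc trivial
  have mem_annihilator : c ∈ Module.annihilator R (ModuleCat.of R (R ⧸ m)) :=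
    Ideal.annihilator_quotient.ge hc
  rw [hasRegularSequence_iff_subsingleton_ext (smul_top_quotient_lt_top hM smul_le)]
  exact forall₂_congr fun k _ =>
    subsingleton_ext_quotient_smul_iff_of_mem_annihilator mem_annihilator hcA

theorem hasRegularSequence_quotient_smul_iff {e : ℕ} (hM : m • (⊤ : Submodule R M) < ⊤)
    (he : HasRegularSequence m M e) (hd : d < e) (hA : A ≤ m • ⊤) (hcA : IsSMulRegular A c) :
    HasRegularSequence m (M ⧸ c • A) d ↔ HasRegularSequence m (M ⧸ A) d := by
  have ext_eq_zero := (hasRegularSequence_iff_subsingleton_ext hM).1 he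
  have iff_ext {b : R} (hb : IsSMulRegular A b) : HasRegularSequence m (M ⧸ b • A) d ↔
      ∀ k < d, Subsingleton (Ext (ModuleCat.of R (R ⧸ m)) (ModuleCat.of R A) (k + 1)) := by
    have smul_le : b • A ≤ m • ⊤ := (Submodule.smul_le_self_of_tower b A).trans hA
    rw [hasRegularSequence_iff_subsingleton_ext (smul_top_quotient_lt_top hM smul_le)]
    exact forall₂_congr fun k hk => subsingleton_ext_quotient_smul_iff_of_subsingleton_ext hb
      (ext_eq_zero k (by lia)) (ext_eq_zero (k + 1) (by lia))
  have iff_ext_one := iff_ext (IsSMulRegular.one A)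
  rw [one_smul] at iff_ext_one
  rw [iff_ext hcA, iff_ext_one]

theorem hasRegularSequence_quotient_sup_smul_iff {B : Submodule R M} {c' : R}
    (hM : m • (⊤ : Submodule R M) < ⊤) (hB : B ≤ m • ⊤) (hc : c ∈ m) (hc' : c' ∈ m)
    (hcA : IsSMulRegular (A.map B.mkQ) c) (hcA' : IsSMulRegular (A.map B.mkQ) c') :
    HasRegularSequence m (M ⧸ B ⊔ c • A) d ↔ HasRegularSequence m (M ⧸ B ⊔ c' • A) d := by
  have smul_lt := smul_top_quotient_lt_top hM hB
  have equiv (b : R) : ((M ⧸ B) ⧸ b • A.map B.mkQ) ≃ₗ[R] M ⧸ B ⊔ b • A :=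
    (Submodule.quotEquivOfEq _ _ (Submodule.map_pointwise_smul b A B.mkQ).symm).trans
      (Submodule.quotientQuotientEquivQuotientSup B (b • A))
  rw [← hasRegularSequence_congr (equiv c), ← hasRegularSequence_congr (equiv c'),
    hasRegularSequence_quotient_smul_iff_of_mem smul_lt hc hcA,
    hasRegularSequence_quotient_smul_iff_of_mem smul_lt hc' hcA']

end Quotient

theorem length_le_supportDim [IsNoetherianRing R] {M : Type*} [AddCommGroup M] [Module R M]
    [Module.Finite R M] {rs : List R} (h : IsRegular M rs) :
    (rs.length : WithBot ℕ∞) ≤ Module.supportDim R M := by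
  induction rs generalizing M with
  | nil =>
    have := h.nontrivial
    exact Order.krullDim_nonneg_iff.2
      (Order.krullDim_ne_bot_iff.1 ((Module.supportDim_ne_bot_iff_nontrivial R M).2 this))
  | cons r rs ih =>
    rw [isRegular_cons_iff] at h
    calc ((r :: rs).length : WithBot ℕ∞) = rs.length + 1 := by push_cast [List.length_cons]; rfl
      _ ≤ Module.supportDim R (QuotSMulTop r M) + 1 := by gcongr; exact ih h.2
      _ ≤ Module.supportDim R M :=
        Module.supportDim_quotSMulTop_succ_le_of_notMem_minimalPrimes
          fun p hp => h.1.notMem_of_mem_minimalPrimes hp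

theorem HasRegularSequence.succ_le_ringKrullDim [IsNoetherianRing R] [IsDomain R] {m I : Ideal R}
    {d : ℕ} (h : HasRegularSequence m (R ⧸ I) d) (hI : I ≠ ⊥) :
    ((d + 1 : ℕ) : WithBot ℕ∞) ≤ ringKrullDim R := by
  obtain ⟨rs, rfl, -, reg⟩ := h
  obtain ⟨r, hrI, hr⟩ := Submodule.exists_mem_ne_zero_of_ne_bot hI
  calc ((rs.length + 1 : ℕ) : WithBot ℕ∞) = rs.length + 1 := by push_cast; rfl
    _ ≤ ringKrullDim (R ⧸ I) + 1 := by
      gcongr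
      rw [← Module.supportDim_quotient_eq_ringKrullDim]
      exact length_le_supportDim reg
    _ ≤ ringKrullDim R := ringKrullDim_succ_le_of_surjective (Ideal.Quotient.mk I)
      Ideal.Quotient.mk_surjective (mem_nonZeroDivisors_of_ne_zero hr)
      (Ideal.Quotient.eq_zero_iff_mem.2 hrI)

end Depth

section Variables

theorem isWeaklyRegular_map_X {σ : Type*} (R : Type*) [CommRing R] {l : List σ} (hl : l.Nodup) :
    IsWeaklyRegular (MvPolynomial σ R) (l.map (X : σ → MvPolynomial σ R)) := by
  rw [isWeaklyRegular_iff]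
  intro k hk
  have hk' : k < l.length := by simpa using hk
  have ofList_take : (Ideal.ofList ((l.map (X : σ → MvPolynomial σ R)).take k) • ⊤ :
      Submodule (MvPolynomial σ R) (MvPolynomial σ R)) = Ideal.span (X '' {a | a ∈ l.take k}) := by
    rw [smul_eq_mul, Ideal.mul_top, Ideal.ofList, ← List.map_take]
    simp only [List.mem_map, Set.image]
    rfl
  have notMem_take : l[k] ∉ l.take k := by
    rw [List.mem_take_iff_getElem]
    rintro ⟨j, hj, hjk⟩
    have := hl.getElem_inj_iff.1 hjk
    lia
  rw [ofList_take, List.getElem_map, isSMulRegular_iff_right_eq_zero_of_smul]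
  intro p hp
  obtain ⟨p, rfl⟩ := Submodule.Quotient.mk_surjective _ p
  rw [← Submodule.Quotient.mk_smul, Submodule.Quotient.mk_eq_zero, smul_eq_mul,
    mem_ideal_span_X_image] at hp
  rw [Submodule.Quotient.mk_eq_zero, mem_ideal_span_X_image]
  intro a ha
  obtain ⟨i, hi, hai⟩ := hp (Finsupp.single l[k] 1 + a) (by
    rwa [mem_support_iff, coeff_X_mul, ← mem_support_iff])
  have : l[k] ≠ i := by rintro rfl; exact notMem_take hi
  exact ⟨i, hi, by simpa [Finsupp.single_apply, this] using hai⟩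
end Variables

section MonomialIdeal
variable {σ : Type*} {R : Type*} [CommRing R]

/-- The ideal of `R[X_i : i ∈ σ]` generated by the monomials with exponents in `s`. -/
noncomputable def monomialIdeal (R : Type*) [CommRing R] (s : Set (σ →₀ ℕ)) :
    Ideal (MvPolynomial σ R) :=
  Ideal.span ((fun a => monomial a 1) '' s)

theorem mem_monomialIdeal {s : Set (σ →₀ ℕ)} {p : MvPolynomial σ R} :
    p ∈ monomialIdeal R s ↔ ∀ a ∈ p.support, ∃ b ∈ s, b ≤ a :=
  mem_ideal_span_monomial_image

theorem monomialIdeal_union (s t : Set (σ →₀ ℕ)) :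
    monomialIdeal R (s ∪ t) = monomialIdeal R s ⊔ monomialIdeal R t := by
  rw [monomialIdeal, Set.image_union, Ideal.span_union]
  rfl

theorem monomialIdeal_vadd (a : σ →₀ ℕ) (s : Set (σ →₀ ℕ)) :
    monomialIdeal R (a +ᵥ s) = (monomial a 1 : MvPolynomial σ R) • monomialIdeal R s := by
  simp only [monomialIdeal, Ideal.span, Submodule.smul_span, ← Set.image_smul, ← Set.image_vadd,
    Set.image_image, vadd_eq_add, smul_eq_mul, monomial_mul, one_mul]

theorem monomialIdeal_ne_bot [Nontrivial R] {s : Set (σ →₀ ℕ)} (hs : s.Nonempty) :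
    monomialIdeal R s ≠ ⊥ := by
  obtain ⟨a, ha⟩ := hs
  exact Submodule.ne_bot_iff _ |>.2
    ⟨monomial a 1, Ideal.subset_span (Set.mem_image_of_mem _ ha), by simp⟩

theorem monomialIdeal_le_idealOfVars {s : Set (σ →₀ ℕ)} (hs : 0 ∉ s) :
    monomialIdeal R s ≤ idealOfVars σ R := by
  intro p hp
  rw [idealOfVars, ← Set.image_univ, mem_ideal_span_X_image]
  intro a ha
  obtain ⟨b, hb, hba⟩ := mem_monomialIdeal.1 hp a ha
  have : a ≠ 0 := by
    rintro rfl
    exact hs (nonpos_iff_eq_zero.1 hba ▸ hb)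
  obtain ⟨i, hi⟩ := Finsupp.ne_iff.1 this
  exact ⟨i, trivial, hi⟩

theorem idealOfVars_ne_top [Nontrivial R] : idealOfVars σ R ≠ ⊤ := by
  rw [Ideal.ne_top_iff_one, idealOfVars, ← Set.image_univ, mem_ideal_span_X_image]
  simp

theorem idealOfVars_smul_top_lt_top [Nontrivial R] :
    idealOfVars σ R • (⊤ : Submodule (MvPolynomial σ R) (MvPolynomial σ R)) < ⊤ := by
  rw [smul_eq_mul, Ideal.mul_top, lt_top_iff_ne_top]
  exact idealOfVars_ne_top

theorem isSMulRegular_X_map_mkQ_monomialIdeal {s t : Set (σ →₀ ℕ)} {i : σ}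
    (hst : ∀ a ∈ s, ∀ b ∈ t, a i ≤ b i) :
    IsSMulRegular (Submodule.map (monomialIdeal R s).mkQ (monomialIdeal R t))
      (X i : MvPolynomial σ R) := by
  refine (isSMulRegular_submodule_iff_right_eq_zero_of_smul _ _).2 ?_
  rintro _ ⟨p, hp, rfl⟩ hXp
  have X_mul_mem : X i * p ∈ monomialIdeal R s := (Submodule.Quotient.mk_eq_zero _).1 hXp
  refine (Submodule.Quotient.mk_eq_zero _).2 (mem_monomialIdeal.2 fun c hc => ?_)
  obtain ⟨b, hb, hbc⟩ := mem_monomialIdeal.1 hp c hc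
  obtain ⟨a, ha, hac⟩ := mem_monomialIdeal.1 X_mul_mem (Finsupp.single i 1 + c) (by
    rwa [mem_support_iff, coeff_X_mul, ← mem_support_iff])
  refine ⟨a, ha, fun l => ?_⟩
  obtain rfl | hl := eq_or_ne l i
  · exact (hst a ha b hb).trans (hbc l)
  · simpa [Finsupp.single_apply, hl.symm] using hac l

end MonomialIdeal

section PolynomialRing
variable {σ K : Type u} [Finite σ] [Field K]

theorem hasRegularSequence_idealOfVars :
    HasRegularSequence (idealOfVars σ K) (MvPolynomial σ K) (Nat.card σ) := by
  have := Fintype.ofFinite σ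
  have mem : ∀ r ∈ (Finset.univ : Finset σ).toList.map X, r ∈ idealOfVars σ K := by
    rintro _ hr
    obtain ⟨i, -, rfl⟩ := List.mem_map.1 hr
    exact Ideal.subset_span ⟨i, rfl⟩
  refine ⟨_, by simp, mem, isWeaklyRegular_map_X K (Finset.nodup_toList _), fun h => ?_⟩
  rw [smul_eq_mul, Ideal.mul_top] at h
  exact idealOfVars_ne_top (top_le_iff.1 (h.le.trans (Ideal.span_le.2 mem)))

theorem HasRegularSequence.lt_card {I : Ideal (MvPolynomial σ K)} {d : ℕ} (hI : I ≠ ⊥)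
    (h : HasRegularSequence (idealOfVars σ K) (MvPolynomial σ K ⧸ I) d) : d < Nat.card σ := by
  have := h.succ_le_ringKrullDim hI
  rw [MvPolynomial.ringKrullDim_of_isNoetherianRing, ringKrullDim_eq_zero_of_field, zero_add]
    at this
  exact_mod_cast this

theorem hasRegularSequence_smul_iff {J : Ideal (MvPolynomial σ K)} {p : MvPolynomial σ K} {d : ℕ}
    (hp : p ≠ 0) (hJ : J ≠ ⊥) (hJm : J ≤ idealOfVars σ K) :
    HasRegularSequence (idealOfVars σ K) (MvPolynomial σ K ⧸ p • J) d ↔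
      HasRegularSequence (idealOfVars σ K) (MvPolynomial σ K ⧸ J) d := by
  have smul_ne_bot : p • J ≠ ⊥ := by
    obtain ⟨r, hr, hr0⟩ := Submodule.exists_mem_ne_zero_of_ne_bot hJ
    exact (Submodule.ne_bot_iff _).2
      ⟨p • r, Submodule.smul_mem_pointwise_smul r p J hr, mul_ne_zero hp hr0⟩
  by_cases hd : d < Nat.card σ
  · have regular : IsSMulRegular J p := fun a b hab =>
      Subtype.ext (mul_left_cancel₀ hp (congrArg Subtype.val hab))
    exact hasRegularSequence_quotient_smul_iff idealOfVars_smul_top_lt_top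
      hasRegularSequence_idealOfVars hd (by rwa [smul_eq_mul, Ideal.mul_top]) regular
  · exact iff_of_false (fun h => hd (h.lt_card smul_ne_bot)) (fun h => hd (h.lt_card hJ))

theorem hasRegularSequence_monomialIdeal_union_iff {s t : Set (σ →₀ ℕ)} {i : σ} {k k' d : ℕ}
    (hst : ∀ a ∈ s, ∀ b ∈ t, a i ≤ b i) (hs : 0 ∉ s) (hk : k ≠ 0) (hk' : k' ≠ 0) :
    HasRegularSequence (idealOfVars σ K)
        (MvPolynomial σ K ⧸ monomialIdeal K (s ∪ (Finsupp.single i k +ᵥ t))) d ↔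
      HasRegularSequence (idealOfVars σ K)
        (MvPolynomial σ K ⧸ monomialIdeal K (s ∪ (Finsupp.single i k' +ᵥ t))) d := by
  have X_mem : X i ∈ idealOfVars σ K := Ideal.subset_span ⟨i, rfl⟩
  have regular := isSMulRegular_X_map_mkQ_monomialIdeal (R := K) hst
  have union_vadd (e : ℕ) : monomialIdeal K (s ∪ (Finsupp.single i e +ᵥ t)) =
      monomialIdeal K s ⊔ (X i ^ e : MvPolynomial σ K) • monomialIdeal K t := by
    rw [monomialIdeal_union, monomialIdeal_vadd, X_pow_eq_monomial]
  rw [union_vadd k, union_vadd k']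
  refine hasRegularSequence_quotient_sup_smul_iff idealOfVars_smul_top_lt_top ?_
    (Ideal.pow_mem_of_mem _ X_mem _ (Nat.pos_of_ne_zero hk))
    (Ideal.pow_mem_of_mem _ X_mem _ (Nat.pos_of_ne_zero hk')) (regular.pow k) (regular.pow k')
  rw [smul_eq_mul, Ideal.mul_top]
  exact monomialIdeal_le_idealOfVars hs

end PolynomialRing

section CloseGap
variable {σ : Type*} {i : σ} {t : ℕ} {a b : σ →₀ ℕ}

/-- Decreases the `i`-th entry of an exponent vector by one if it exceeds `t`. Applied to a family
in which the value `t` is missing from row `i`, this closes the gap at `t`. -/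
noncomputable def closeGap (i : σ) (t : ℕ) (a : σ →₀ ℕ) : σ →₀ ℕ :=
  if t < a i then a - Finsupp.single i 1 else a

theorem closeGap_apply_self : closeGap i t a i = if t < a i then a i - 1 else a i := by
  unfold closeGap
  split_ifs <;> simp

theorem closeGap_apply_of_ne {l : σ} (h : l ≠ i) : closeGap i t a l = a l := by
  unfold closeGap
  split_ifs <;> simp [h.symm]

theorem closeGap_le : closeGap i t a ≤ a := by
  unfold closeGap
  split_ifs
  exacts [tsub_le_self, le_rfl]

theorem closeGap_apply_le_iff (ha : a i ≠ t) (hb : b i ≠ t) (l : σ) :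
    closeGap i t a l ≤ closeGap i t b l ↔ a l ≤ b l := by
  obtain rfl | hl := eq_or_ne l i
  · rw [closeGap_apply_self, closeGap_apply_self]
    grind
  · rw [closeGap_apply_of_ne hl, closeGap_apply_of_ne hl]

theorem single_vadd_image_closeGap_zero {s : Set (σ →₀ ℕ)} (hs : ∀ a ∈ s, a i ≠ 0) :
    Finsupp.single i 1 +ᵥ closeGap i 0 '' s = s := by
  rw [← Set.image_vadd, Set.image_image]
  refine (Set.image_congr fun a ha => ?_).trans s.image_id'
  have single_le : Finsupp.single i 1 ≤ a := by
    simpa [Finsupp.single_le_iff, Nat.one_le_iff_ne_zero] using hs a ha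
  rw [closeGap, if_pos (Nat.pos_of_ne_zero (hs a ha)), vadd_eq_add, add_tsub_cancel_of_le single_le]

theorem exists_eq_union_single_vadd {s : Set (σ →₀ ℕ)} (ht : t ≠ 0) (hs : ∀ a ∈ s, a i ≠ t) :
    ∃ L U : Set (σ →₀ ℕ), (∀ a ∈ L, ∀ b ∈ U, a i ≤ b i) ∧
      s = L ∪ (Finsupp.single i 2 +ᵥ U) ∧ closeGap i t '' s = L ∪ (Finsupp.single i 1 +ᵥ U) := by
  let L := {a ∈ s | a i < t}
  let H := {a ∈ s | t < a i}
  have split : s = L ∪ H := by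
    ext a
    have := hs a
    grind
  have image_eq {f : (σ →₀ ℕ) → σ →₀ ℕ} {k : ℕ} (hL : ∀ a ∈ L, f a = a)
      (hH : ∀ a ∈ H, f a = Finsupp.single i k + (a - Finsupp.single i 2)) :
      f '' s = L ∪ (Finsupp.single i k +ᵥ (fun a => a - Finsupp.single i 2) '' H) := by
    rw [split, Set.image_union, Set.image_congr hL, Set.image_id', ← Set.image_vadd,
      Set.image_image, Set.image_congr hH]
    rfl
  have single_le {k : ℕ} (hk : k ≤ 2) {a} (ha : a ∈ H) : Finsupp.single i k ≤ a := by
    have := ha.2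
    simp only [Finsupp.single_le_iff]
    lia
  refine ⟨L, _, ?_, s.image_id'.symm.trans (image_eq (fun _ _ => rfl) fun a ha => ?_),
    image_eq (fun a ha => if_neg ha.2.not_gt) fun a ha => ?_⟩
  · rintro a ha _ ⟨b, hb, rfl⟩
    have := ha.2
    have := hb.2
    simp only [Finsupp.tsub_apply, Finsupp.single_eq_same]
    lia
  · rw [add_tsub_cancel_of_le (single_le le_rfl ha)]
  · ext l
    have := single_le le_rfl ha l
    have := single_le one_le_two ha l
    have : (Finsupp.single i 2 : σ →₀ ℕ) l = Finsupp.single i 1 l + Finsupp.single i 1 l := by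
      rw [← Finsupp.add_apply, ← Finsupp.single_add]
    simp only [closeGap, if_pos ha.2, Finsupp.tsub_apply, Finsupp.add_apply]
    lia

end CloseGap

theorem hasRegularSequence_image_closeGap_iff {σ K : Type u} [Finite σ] [Field K]
    {s : Set (σ →₀ ℕ)} {i : σ} {t d : ℕ} (hs : s.Nonempty) (ht : ∀ a ∈ s, a i ≠ t)
    (h0 : 0 ∉ closeGap i t '' s) :
    HasRegularSequence (idealOfVars σ K) (MvPolynomial σ K ⧸ monomialIdeal K s) d ↔
      HasRegularSequence (idealOfVars σ K)
        (MvPolynomial σ K ⧸ monomialIdeal K (closeGap i t '' s)) d := by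
  obtain rfl | t_ne_zero := eq_or_ne t 0
  · have := monomialIdeal_vadd (R := K) (Finsupp.single i 1) (closeGap i 0 '' s)
    rw [single_vadd_image_closeGap_zero ht] at this
    rw [this]
    exact hasRegularSequence_smul_iff (by simp) (monomialIdeal_ne_bot (hs.image _))
      (monomialIdeal_le_idealOfVars h0)
  · obtain ⟨L, U, hLU, eq_union, closeGap_eq_union⟩ := exists_eq_union_single_vadd t_ne_zero ht
    rw [closeGap_eq_union] at h0 ⊢
    rw [eq_union]
    exact hasRegularSequence_monomialIdeal_union_iff hLU (fun h => h0 (.inl h)) two_ne_zero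
      one_ne_zero

section Signature
open Finset

theorem card_image_le_card_image {ι α β : Type*} [DecidableEq α] [DecidableEq β] [Nonempty β]
    {s : Finset ι} {f : ι → α} {g : ι → β} (h : g.FactorsThrough f) :
    #(s.image g) ≤ #(s.image f) := by
  have := Classical.arbitrary β
  rw [← h.extend_comp (fun _ => this), ← image_image]
  exact card_image_le

variable {n q : ℕ} {v w : Fin q → Fin n →₀ ℕ}

theorem sgnExp_apply (v : Fin q → Fin n →₀ ℕ) (j : Fin q) (i : Fin n) :
    sgnExp v j i = #((univ.filter fun k => v k i < v j i).image fun k => v k i) :=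
  congrArg card (filter_image (s := univ) (f := fun k : Fin q => v k i) (p := (· < v j i)))

theorem sgnExp_le_of_row_le_iff (h : ∀ j l i, v j i ≤ v l i ↔ w j i ≤ w l i) :
    sgnExp v ≤ sgnExp w := by
  intro j i
  have eq_of_eq : (fun k => v k i).FactorsThrough fun k => w k i := fun k l hkl =>
    le_antisymm ((h k l i).2 hkl.le) ((h l k i).2 hkl.ge)
  have lt_iff (k) : v k i < v j i ↔ w k i < w j i := by
    rw [← not_le, ← not_le, h]
  rw [sgnExp_apply, sgnExp_apply]
  simp only [lt_iff]
  exact card_image_le_card_image eq_of_eq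

theorem sgnExp_congr (h : ∀ j l i, v j i ≤ v l i ↔ w j i ≤ w l i) : sgnExp v = sgnExp w :=
  le_antisymm (sgnExp_le_of_row_le_iff h) (sgnExp_le_of_row_le_iff fun j l i => (h j l i).symm)

theorem sgnExp_eq_self (h : ∀ i t, (∃ j, t < v j i) → ∃ j, v j i = t) : sgnExp v = v := by
  ext j i
  have image_filter : (univ.image fun k => v k i).filter (· < v j i) = range (v j i) := by
    ext t
    simp only [mem_filter, mem_image, mem_univ, true_and, mem_range]
    exact ⟨And.right, fun ht => ⟨h i t ⟨j, ht⟩, ht⟩⟩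
  exact (congrArg card image_filter).trans (card_range _)

end Signature

section Main
variable {K : Type} [Field K] {n q : ℕ} {v : Fin q → Fin n →₀ ℕ}

theorem monIdeal_eq_monomialIdeal : monIdeal K v = monomialIdeal K (Set.range v) := by
  rw [monIdeal, monomialIdeal, ← Set.range_comp]
  rfl

theorem exists_not_le_of_not_isPrincipal (h : ¬ Submodule.IsPrincipal (monIdeal K v))
    (j : Fin q) : ∃ l, ¬ v j ≤ v l := by
  contrapose! h
  refine ⟨monomial (v j) 1, le_antisymm (Ideal.span_le.2 ?_) (Ideal.span_mono ?_)⟩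
  · rintro _ ⟨l, rfl⟩
    exact Ideal.mem_span_singleton.2 (monomial_dvd_monomial.2 ⟨.inr (h l), one_dvd 1⟩)
  · exact Set.singleton_subset_iff.2 ⟨j, rfl⟩

theorem sum_closeGap_lt {i : Fin n} {t : ℕ} {j : Fin q} (hj : t < v j i) :
    ∑ k, ∑ l, closeGap i t (v k) l < ∑ k, ∑ l, v k l := by
  refine Finset.sum_lt_sum (fun k _ => Finset.sum_le_sum fun l _ => closeGap_le l)
    ⟨j, Finset.mem_univ j, Finset.sum_lt_sum (fun l _ => closeGap_le l) ⟨i, Finset.mem_univ i, ?_⟩⟩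
  rw [closeGap_apply_self, if_pos hj]
  lia

theorem hasRegularSequence_monIdeal_iff_sgnExp (hv : ∀ j, ∃ l, ¬ v j ≤ v l) (d : ℕ) :
    HasRegularSequence (idealOfVars (Fin n) K) (MvPolynomial (Fin n) K ⧸ monIdeal K v) d ↔
      HasRegularSequence (idealOfVars (Fin n) K)
        (MvPolynomial (Fin n) K ⧸ monIdeal K (sgnExp v)) d := by
  induction hN : ∑ j, ∑ i, v j i using Nat.strong_induction_on generalizing v with
  | _ N ih =>
  by_cases h : ∀ i t, (∃ j, t < v j i) → ∃ j, v j i = t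
  · rw [sgnExp_eq_self h]
  push Not at h
  obtain ⟨i, t, ⟨j, hj⟩, ht⟩ := h
  have le_iff (k l m) := closeGap_apply_le_iff (ht k) (ht l) m
  have hw (k) : ∃ l, ¬ closeGap i t (v k) ≤ closeGap i t (v l) :=
    (hv k).imp fun l hl h => hl fun m => (le_iff k l m).1 (h m)
  have zero_notMem : 0 ∉ closeGap i t '' Set.range v := by
    rintro ⟨_, ⟨k, rfl⟩, hk⟩
    obtain ⟨l, hl⟩ := hw k
    exact hl (hk ▸ zero_le)
  have step := hasRegularSequence_image_closeGap_iff (K := K) (d := d) (s := Set.range v)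
    ⟨v j, j, rfl⟩ (Set.forall_mem_range.2 ht) zero_notMem
  rw [← Set.range_comp, ← monIdeal_eq_monomialIdeal, ← monIdeal_eq_monomialIdeal] at step
  have sgnExp_eq : sgnExp (closeGap i t ∘ v) = sgnExp v := sgnExp_congr le_iff
  rw [step, ih _ (hN ▸ sum_closeGap_lt hj) (v := closeGap i t ∘ v) hw rfl, sgnExp_eq]

theorem depth_quot_eq_depth_quot_sgn_general (K : Type) [Field K] (n q : ℕ)
    (v : Fin q → Fin n →₀ ℕ) (hnp : ¬ Submodule.IsPrincipal (monIdeal K v)) :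
    depthQuot K n (monIdeal K v) = depthQuot K n (monIdeal K (sgnExp v)) :=
  congrArg sSup <| Set.ext <|
    hasRegularSequence_monIdeal_iff_sgnExp (exists_not_le_of_not_isPrincipal hnp)

end Main

/-- **Signature invariants of monomial ideals** (Theorem: depth).
Let `I` be a monomial ideal of `R = K[x_1,…,x_n]` that is not a principal ideal,
with minimal monomial generating set `G(I) = {x^{v_1},…,x^{v_q}}`.  Then
`depth(R/I) = depth(R/sgn(I))`. -/
theorem depth_quot_eq_depth_quot_sgn (K : Type) [Field K] (n q : ℕ)
    (v : Fin q → Fin n →₀ ℕ) (hv : AntichainFam v)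
    (I : Ideal (MvPolynomial (Fin n) K)) (hI : I = monIdeal K v)
    (hnp : ¬ Submodule.IsPrincipal I) :
    depthQuot K n I = depthQuot K n (monIdeal K (sgnExp v)) := by
  subst hI
  exact depth_quot_eq_depth_quot_sgn_general K n q v hnp
end

section
/- Let I be a monomial ideal of R = K[x_1,…,x_n] of height at least 2. Then dim(R/I) = dim(R/sgn(I)), where dim denotes Krull dimension. -/
open MvPolynomial

/-- The height (codimension) of an ideal: the infimum of the heights of the prime ideals
containing it, where the height of a prime is the supremum of the lengths of chains of
primes descending from it. -/
noncomputable def heightOf {R : Type*} [CommRing R] (I : Ideal R) : ℕ∞ :=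
  ⨅ p ∈ { p : PrimeSpectrum R | I ≤ p.asIdeal }, Order.height p

/-! A prime contains a monomial exactly when it contains a variable of its support, so `V(I)`, and
hence `dim (R/I)`, depends only on the supports of the generators of `I`. The signature keeps the
support of every column as soon as each row has a zero entry. A row without zeros would mean
`I ⊆ (x_i)`, an ideal of height at most `1` by Krull's principal ideal theorem. -/

section Support

variable {σ ι R : Type*}

theorem monomial_one_mem_iff_exists_X_mem [CommSemiring R] {p : Ideal (MvPolynomial σ R)}
    [hp : p.IsPrime] {a : σ →₀ ℕ} :
    monomial a (1 : R) ∈ p ↔ ∃ i ∈ a.support, (X i : MvPolynomial σ R) ∈ p := by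
  rw [← prod_X_pow_eq_monomial, hp.prod_mem_iff]
  exact exists_congr fun i => and_congr_right fun hi =>
    hp.pow_mem_iff_mem _ (Nat.pos_of_ne_zero (Finsupp.mem_support_iff.mp hi))

theorem zeroLocus_span_monomial_congr [CommSemiring R] {a b : ι → σ →₀ ℕ}
    (h : ∀ j, (a j).support = (b j).support) :
    PrimeSpectrum.zeroLocus
        (Ideal.span (Set.range fun j => monomial (a j) (1 : R)) : Set (MvPolynomial σ R)) =
      PrimeSpectrum.zeroLocus (Ideal.span (Set.range fun j => monomial (b j) (1 : R))) := by
  ext p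
  simp only [PrimeSpectrum.zeroLocus_span, PrimeSpectrum.mem_zeroLocus, Set.range_subset_iff,
    SetLike.mem_coe, monomial_one_mem_iff_exists_X_mem, h]

theorem ringKrullDim_quotient_span_monomial_congr [CommRing R] {a b : ι → σ →₀ ℕ}
    (h : ∀ j, (a j).support = (b j).support) :
    ringKrullDim (MvPolynomial σ R ⧸ Ideal.span (Set.range fun j => monomial (a j) (1 : R))) =
      ringKrullDim
        (MvPolynomial σ R ⧸ Ideal.span (Set.range fun j => monomial (b j) (1 : R))) := by
  rw [ringKrullDim_quotient, ringKrullDim_quotient, zeroLocus_span_monomial_congr h]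

end Support

section Height

variable {R : Type*} [CommRing R]

theorem heightOf_eq_height (I : Ideal R) : heightOf I = I.height := by
  apply le_antisymm
  · rw [Ideal.height_eq_inf_minimalPrimes]
    refine le_iInf₂ fun p hp => ?_
    let P : PrimeSpectrum R := ⟨p, hp.isPrime⟩
    calc heightOf I ≤ Order.height P := iInf₂_le P hp.le
      _ = p.height := P.height_eq_orderHeight.symm
  · exact le_iInf₂ fun P hP => (Ideal.height_mono hP).trans_eq P.height_eq_orderHeight

theorem exists_not_dvd_of_two_le_height_span [IsNoetherianRing R] {s : Set R}
    (hs : 2 ≤ (Ideal.span s).height) {x : R} (hx : ¬IsUnit x) : ∃ y ∈ s, ¬x ∣ y := by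
  by_contra! hdvd
  have hle : Ideal.span s ≤ Ideal.span {x} :=
    Ideal.span_le.mpr fun y hy => Ideal.mem_span_singleton.mpr (hdvd y hy)
  have : (2 : ℕ∞) ≤ 1 :=
    hs.trans ((Ideal.height_mono hle).trans (Ideal.height_span_singleton_le_one hx))
  exact absurd this (by decide)

theorem exists_apply_eq_zero_of_two_le_height_span_monomial [IsNoetherianRing R] [Nontrivial R]
    {σ ι : Type*} [Finite σ] {v : ι → σ →₀ ℕ}
    (hv : 2 ≤ (Ideal.span (Set.range fun j => monomial (v j) (1 : R))).height) (i : σ) :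
    ∃ j, v j i = 0 := by
  have hX : ¬IsUnit (X i : MvPolynomial σ R) := fun hu => by
    simpa using X_dvd_monomial.mp (hu.dvd : (X i : MvPolynomial σ R) ∣ monomial 0 1)
  obtain ⟨_, ⟨j, rfl⟩, hj⟩ := exists_not_dvd_of_two_le_height_span hv hX
  exact ⟨j, by simpa [X_dvd_monomial] using hj⟩

end Height

section Signature

variable {n q : ℕ} {v : Fin q → Fin n →₀ ℕ}

theorem sgnExp_apply_eq_zero_iff {j : Fin q} {i : Fin n} :
    sgnExp v j i = 0 ↔ ∀ k, v j i ≤ v k i := by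
  simp [sgnExp, Finset.filter_eq_empty_iff]

theorem support_sgnExp (h : ∀ i, ∃ k, v k i = 0) (j : Fin q) :
    (sgnExp v j).support = (v j).support := by
  ext i
  obtain ⟨k, hk⟩ := h i
  rw [Finsupp.mem_support_iff, Finsupp.mem_support_iff, not_iff_not, sgnExp_apply_eq_zero_iff]
  exact ⟨fun hmin => Nat.le_zero.mp (hk ▸ hmin k), fun hj l => hj ▸ Nat.zero_le (v l i)⟩

end Signature

theorem dim_quot_eq_dim_quot_sgn_general (K : Type) [Field K] {n q : ℕ}
    {v : Fin q → Fin n →₀ ℕ} (h : ∀ i, ∃ k, v k i = 0) :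
    ringKrullDim (MvPolynomial (Fin n) K ⧸ monIdeal K v) =
      ringKrullDim (MvPolynomial (Fin n) K ⧸ monIdeal K (sgnExp v)) :=
  ringKrullDim_quotient_span_monomial_congr fun j => (support_sgnExp h j).symm

/-- **Signature invariants of monomial ideals** (Theorem: Krull dimension).
Let `I` be a monomial ideal of `R = K[x_1,…,x_n]` of height at least `2`, with minimal
monomial generating set `G(I) = {x^{v_1},…,x^{v_q}}`.  Then
`dim(R/I) = dim(R/sgn(I))`. -/
theorem dim_quot_eq_dim_quot_sgn (K : Type) [Field K] (n q : ℕ)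
    (v : Fin q → Fin n →₀ ℕ) (hv : AntichainFam v)
    (I : Ideal (MvPolynomial (Fin n) K)) (hI : I = monIdeal K v)
    (hht : (2 : ℕ∞) ≤ heightOf I) :
    ringKrullDim (MvPolynomial (Fin n) K ⧸ I) =
      ringKrullDim (MvPolynomial (Fin n) K ⧸ monIdeal K (sgnExp v)) := by
  subst hI
  rw [heightOf_eq_height] at hht
  exact dim_quot_eq_dim_quot_sgn_general K
    (exists_apply_eq_zero_of_two_le_height_span_monomial hht)
end

section
/- Let I be a monomial ideal of R = K[x_1,…,x_n] of height at least 2. Then v(sgn(I)) ≤ v(I), where v denotes the v-number. -/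
open MvPolynomial

/-- The v-number of a monomial ideal `I`:
`v(I) = min { d ≥ 0 : ∃ monomial x^a of degree d with (I : x^a) ∈ Ass(R/I) }`. -/
noncomputable def vNumber (K : Type) [Field K] (n : ℕ)
    (I : Ideal (MvPolynomial (Fin n) K)) : ℕ :=
  sInf { d : ℕ | ∃ a : Fin n →₀ ℕ, (∑ i, a i) = d ∧
    Submodule.colon I (Ideal.span {(monomial a (1 : K) : MvPolynomial (Fin n) K)}) ∈
      associatedPrimes (MvPolynomial (Fin n) K) (MvPolynomial (Fin n) K ⧸ I) }

/-!
The colon ideal `(I : x^a)` of `I = (x^{v_1}, …, x^{v_q})` is prime exactly when every `v_j`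
exceeds `a` in some coordinate `i` with `x_i x^a ∈ I`: it is then generated by those `x_i`.
This criterion only compares the entries of each row of the incidence matrix with `a_i` and
`a_i + 1`. Height at least `2` puts a zero in every row, as otherwise `I ⊆ (x_i)`. Replacing `a_i`
by the number `b_i ≤ a_i` of distinct nonzero entries of row `i` that are at most `a_i` therefore
carries an exponent with prime colon ideal for `I` to one for `sgn(I)`, of no larger degree.
-/

section Colon

lemma colon_singleton_mem_associatedPrimes_iff {R : Type*} [CommRing R] {I : Ideal R} {x : R} :
    Submodule.colon I {x} ∈ associatedPrimes R (R ⧸ I) ↔ (Submodule.colon I {x}).IsPrime := by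
  refine ⟨IsAssociatedPrime.isPrime, fun h => ⟨h, Ideal.Quotient.mk I x, ?_⟩⟩
  have colon_mk : Submodule.colon (⊥ : Submodule R (R ⧸ I)) {Ideal.Quotient.mk I x} =
      Submodule.colon I {x} := by
    ext r
    rw [Submodule.mem_colon_singleton, Submodule.mem_colon_singleton, Submodule.mem_bot,
      ← Ideal.Quotient.eq_zero_iff_mem]
    rfl
  rw [colon_mk, h.radical]

variable {σ ι R : Type*}

lemma mem_span_range_monomial_iff [CommSemiring R] {v : ι → σ →₀ ℕ} {f : MvPolynomial σ R} :
    f ∈ Ideal.span (Set.range fun j => monomial (v j) (1 : R)) ↔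
      ∀ c ∈ f.support, ∃ j, v j ≤ c := by
  rw [Set.range_comp' (fun s => monomial s (1 : R)) v, mem_ideal_span_monomial_image]
  simp only [Set.exists_range_iff]

lemma mem_colon_monomial_iff [CommSemiring R] {v : ι → σ →₀ ℕ} {a : σ →₀ ℕ}
    {f : MvPolynomial σ R} :
    f ∈ Submodule.colon (Ideal.span (Set.range fun j => monomial (v j) (1 : R)))
      {monomial a (1 : R)} ↔ ∀ c ∈ f.support, ∃ j, v j ≤ a + c := by
  have support_mul : (f * monomial a 1).support = f.support.map (addRightEmbedding a) :=
    AddMonoidAlgebra.support_coeff_mul_single f _ (by simp) _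
  rw [Submodule.mem_colon_singleton, smul_eq_mul, mem_span_range_monomial_iff, support_mul]
  simp [add_comm]

lemma monomial_mem_colon_monomial_iff [CommSemiring R] [Nontrivial R] {v : ι → σ →₀ ℕ}
    {a c : σ →₀ ℕ} :
    monomial c 1 ∈ Submodule.colon (Ideal.span (Set.range fun j => monomial (v j) (1 : R)))
      {monomial a (1 : R)} ↔ ∃ j, v j ≤ a + c := by
  classical
  rw [mem_colon_monomial_iff, support_monomial]
  simp

lemma exists_X_mem_of_monomial_mem [CommSemiring R] {P : Ideal (MvPolynomial σ R)} [P.IsPrime]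
    {c : σ →₀ ℕ} (h : monomial c 1 ∈ P) : ∃ i, c i ≠ 0 ∧ X i ∈ P := by
  rw [monomial_eq, C_1, one_mul, Finsupp.prod, Ideal.IsPrime.prod_mem_iff] at h
  obtain ⟨i, hi, hX⟩ := h
  exact ⟨i, Finsupp.mem_support_iff.mp hi, Ideal.IsPrime.mem_of_pow_mem ‹_› _ hX⟩

lemma isPrime_span_X_image [CommRing R] [IsDomain R] (s : Set σ) :
    (Ideal.span (X '' s : Set (MvPolynomial σ R))).IsPrime := by
  classical
  set P := Ideal.span (X '' s : Set (MvPolynomial σ R))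
  let φ : MvPolynomial σ R →ₐ[R] MvPolynomial σ R := aeval fun i => if i ∈ s then 0 else X i
  have X_mem {i : σ} (hi : i ∈ s) : X i ∈ P := Ideal.subset_span ⟨i, hi, rfl⟩
  have mk_comp : (Ideal.Quotient.mkₐ R P).comp φ = Ideal.Quotient.mkₐ R P := by
    ext i
    by_cases hi : i ∈ s
    · simpa [φ, hi] using (Ideal.Quotient.eq_zero_iff_mem.mpr (X_mem hi)).symm
    · simp [φ, hi]
  have ker_eq : RingHom.ker φ = P := by
    refine le_antisymm (fun f hf => ?_) (Ideal.span_le.mpr ?_)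
    · rw [← Ideal.Quotient.eq_zero_iff_mem, ← Ideal.Quotient.mkₐ_eq_mk R, ← mk_comp,
        AlgHom.comp_apply, RingHom.mem_ker.mp hf, map_zero]
    · rintro _ ⟨i, hi, rfl⟩
      simp [φ, hi]
  exact ker_eq ▸ RingHom.ker_isPrime φ

/-- The combinatorial form of "`(I : x^a)` is prime" for the monomial ideal `I` generated by the
`x^{v j}`: each `x^{v j}` is divisible by a variable `x_i` to a power higher than in `x^a`, for some
`i` with `x_i x^a ∈ I`. The conditions for all `j` together imply `x^a ∉ I`. -/
def IsPrimeColonExponent (v : ι → σ →₀ ℕ) (a : σ →₀ ℕ) : Prop :=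
  ∀ j, ∃ i, a i < v j i ∧ ∃ k, v k ≤ a + Finsupp.single i 1

theorem isPrime_colon_monomial_iff [CommRing R] [IsDomain R] {v : ι → σ →₀ ℕ} {a : σ →₀ ℕ} :
    (Submodule.colon (Ideal.span (Set.range fun j => monomial (v j) (1 : R)))
      {monomial a (1 : R)}).IsPrime ↔ IsPrimeColonExponent v a := by
  constructor
  · intro hP j
    obtain ⟨i, hi, hX⟩ := exists_X_mem_of_monomial_mem
      (monomial_mem_colon_monomial_iff.mpr ⟨j, le_add_tsub⟩ : monomial (v j - a) (1 : R) ∈ _)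
    exact ⟨i, Nat.lt_of_sub_ne_zero hi, monomial_mem_colon_monomial_iff.mp hX⟩
  · intro ha
    suffices Submodule.colon (Ideal.span (Set.range fun j => monomial (v j) (1 : R)))
        {monomial a (1 : R)} = Ideal.span (X '' {i | ∃ k, v k ≤ a + Finsupp.single i 1}) from
      this ▸ isPrime_span_X_image _
    refine le_antisymm (fun f hf => mem_ideal_span_X_image.mpr fun c hc => ?_)
      (Ideal.span_le.mpr ?_)
    · obtain ⟨j, hj⟩ := mem_colon_monomial_iff.mp hf c hc
      obtain ⟨i, hi, hk⟩ := ha j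
      have : v j i ≤ a i + c i := hj i
      exact ⟨i, hk, by lia⟩
    · rintro _ ⟨i, hi, rfl⟩
      exact monomial_mem_colon_monomial_iff.mpr hi

end Colon

namespace IsPrimeColonExponent

variable {σ ι : Type*} {v w : ι → σ →₀ ℕ} {a b : σ →₀ ℕ}

lemma ne_zero (ha : IsPrimeColonExponent v a) (j : ι) : v j ≠ 0 := by
  obtain ⟨i, hi, -⟩ := ha j
  intro hj
  simp [hj] at hi

-- A maximal `a` with `x^a ∉ I`, among divisors of a common multiple of the generators, works.
lemma exists_of_ne_zero [Finite ι] (hv : ∀ j, v j ≠ 0) : ∃ a, IsPrimeColonExponent v a := by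
  classical
  cases nonempty_fintype ι
  let N : σ →₀ ℕ := Finset.univ.sup v
  have zero_mem : 0 ∈ {a ∈ Set.Iic N | ∀ j, ¬ v j ≤ a} :=
    ⟨zero_le (a := N), fun j hj => hv j (le_zero_iff.mp hj)⟩
  obtain ⟨a, ⟨haN, hva⟩, hmax⟩ := ((Set.finite_Iic N).sep _).exists_maximal ⟨0, zero_mem⟩
  refine ⟨a, fun j => ?_⟩
  obtain ⟨i, hi⟩ : ∃ i, a i < v j i := by simpa [Finsupp.le_def] using hva j
  have single_le : a + Finsupp.single i 1 ≤ N := fun l => by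
    have hjN : v j l ≤ N l := (Finset.le_sup (f := v) (Finset.mem_univ j) :) l
    have haN : a l ≤ N l := haN l
    rcases eq_or_ne i l with rfl | hil
    · simpa using hi.trans_le hjN
    · simpa [hil] using haN
  refine ⟨i, hi, ?_⟩
  by_contra! hnot
  simpa using hmax ⟨single_le, hnot⟩ le_self_add i

lemma transfer (ha : IsPrimeColonExponent v a) (hlt : ∀ j i, a i < v j i → b i < w j i)
    (hle : ∀ j i, v j i ≤ a i → w j i ≤ b i)
    (hle_succ : ∀ j i, v j i ≤ a i + 1 → w j i ≤ b i + 1) : IsPrimeColonExponent w b := by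
  intro j
  obtain ⟨i, hi, k, hk⟩ := ha j
  refine ⟨i, hlt j i hi, k, fun l => ?_⟩
  have hl := hk l
  rcases eq_or_ne i l with rfl | hil
  · simpa using hle_succ k i (by simpa using hl)
  · simpa [hil] using hle k l (by simpa [hil] using hl)

end IsPrimeColonExponent

section Signature

variable {n q : ℕ} {v : Fin q → Fin n →₀ ℕ} {a : Fin n →₀ ℕ} {i : Fin n} {j : Fin q}

lemma sgnExp_apply_s6 : sgnExp v j i = Nat.count (fun m => ∃ k, v k i = m) (v j i) := by
  rw [Nat.count_eq_card_filter_range]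
  simp only [sgnExp, Finsupp.equivFunOnFinite_symm_apply_apply]
  congr 1
  ext m
  simp [and_comm]

lemma sgnExp_eq_zero (hj : v j = 0) : sgnExp v j = 0 := by
  ext i
  simp [sgnExp_apply_s6, hj]

/-- The exponent vector whose `i`-th coordinate is the number of distinct nonzero entries of the
`i`-th row of the incidence matrix that are at most `a i`. If the row contains `0`, this is the
position of the largest entry not exceeding `a i`, so that `sgnExp v j = sgnFloor v (v j)` when all
rows do. The predicate is shifted by one because `Nat.count` counts the numbers below its bound. -/
noncomputable def sgnFloor (v : Fin q → Fin n →₀ ℕ) (a : Fin n →₀ ℕ) : Fin n →₀ ℕ :=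
  Finsupp.equivFunOnFinite.symm fun i => Nat.count (fun m => ∃ k, v k i = m + 1) (a i)

lemma sgnFloor_le : sgnFloor v a ≤ a := fun _ => Nat.count_le _

lemma sgnFloor_apply_add_one (h0 : ∃ k, v k i = 0) :
    sgnFloor v a i + 1 = Nat.count (fun m => ∃ k, v k i = m) (a i + 1) := by
  rw [Nat.count_succ', if_pos h0]
  rfl

lemma sgnFloor_lt_sgnExp (h0 : ∃ k, v k i = 0) (h : a i < v j i) :
    sgnFloor v a i < sgnExp v j i := by
  rw [← Nat.add_one_le_iff, sgnFloor_apply_add_one h0, sgnExp_apply_s6]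
  exact Nat.count_monotone _ h

lemma sgnExp_le_sgnFloor (h0 : ∃ k, v k i = 0) (h : v j i ≤ a i) :
    sgnExp v j i ≤ sgnFloor v a i := by
  rw [← Nat.lt_add_one_iff, sgnFloor_apply_add_one h0, sgnExp_apply_s6]
  exact Nat.count_strict_mono ⟨j, rfl⟩ (Nat.lt_add_one_of_le h)

lemma sgnExp_le_sgnFloor_add_one (h0 : ∃ k, v k i = 0) (h : v j i ≤ a i + 1) :
    sgnExp v j i ≤ sgnFloor v a i + 1 := by
  rw [sgnFloor_apply_add_one h0, sgnExp_apply_s6]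
  exact Nat.count_monotone _ h

lemma IsPrimeColonExponent.sgnFloor (ha : IsPrimeColonExponent v a)
    (h0 : ∀ i, ∃ k, v k i = 0) : IsPrimeColonExponent (sgnExp v) (sgnFloor v a) :=
  ha.transfer (fun _ i => sgnFloor_lt_sgnExp (h0 i)) (fun _ i => sgnExp_le_sgnFloor (h0 i))
    (fun _ i => sgnExp_le_sgnFloor_add_one (h0 i))

end Signature

lemma heightOf_le_one_of_le_span_singleton {R : Type*} [CommRing R] [IsNoetherianRing R]
    {I : Ideal R} {x : R} (hx : ¬ IsUnit x) (hI : I ≤ Ideal.span {x}) : heightOf I ≤ 1 := by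
  have ne_top : Ideal.span {x} ≠ ⊤ := mt Ideal.span_singleton_eq_top.mp hx
  obtain ⟨p, hp⟩ := Ideal.nonempty_minimalPrimes ne_top
  let P : PrimeSpectrum R := ⟨p, hp.1.1⟩
  calc heightOf I ≤ Order.height P := iInf₂_le P (hI.trans hp.1.2)
    _ = p.height := P.height_eq_orderHeight.symm
    _ ≤ 1 := Ideal.height_le_one_of_isPrincipal_of_mem_minimalPrimes _ p hp

section MonIdeal

variable {K : Type} [Field K] {n q : ℕ} {v : Fin q → Fin n →₀ ℕ}

lemma exists_apply_eq_zero_of_two_le_heightOf (hht : 2 ≤ heightOf (monIdeal K v)) (i : Fin n) :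
    ∃ j, v j i = 0 := by
  by_contra! hpos
  have le_span_X : monIdeal K v ≤ Ideal.span {X i} := by
    rw [monIdeal, Ideal.span_le]
    rintro _ ⟨j, rfl⟩
    exact Ideal.mem_span_singleton.mpr (X_dvd_monomial.mpr (Or.inr (hpos j)))
  have height_le : heightOf (monIdeal K v) ≤ 1 :=
    heightOf_le_one_of_le_span_singleton X_prime.not_isUnit le_span_X
  exact absurd (hht.trans height_le) (by norm_num)

lemma vNumber_monIdeal : vNumber K n (monIdeal K v) =
    sInf {d | ∃ a, ∑ i, a i = d ∧ IsPrimeColonExponent v a} := by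
  simp only [vNumber, Ideal.colon_span, colon_singleton_mem_associatedPrimes_iff]
  simp only [monIdeal, isPrime_colon_monomial_iff]

theorem vnumber_sgn_le_vnumber_general (K : Type) [Field K] {n q : ℕ} (v : Fin q → Fin n →₀ ℕ)
    (h0 : ∀ i, ∃ j, v j i = 0) :
    vNumber K n (monIdeal K (sgnExp v)) ≤ vNumber K n (monIdeal K v) := by
  rw [vNumber_monIdeal, vNumber_monIdeal]
  by_cases hv : ∃ j, v j = 0
  -- Here `sgn(I) = R` has no associated primes, and `vNumber` takes the junk value `sInf ∅ = 0`.
  · obtain ⟨j, hj⟩ := hv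
    have no_exponent (b : Fin n →₀ ℕ) : ¬ IsPrimeColonExponent (sgnExp v) b :=
      fun hb => hb.ne_zero j (sgnExp_eq_zero hj)
    simp [no_exponent]
  · obtain ⟨a₀, ha₀⟩ := IsPrimeColonExponent.exists_of_ne_zero (not_exists.mp hv)
    obtain ⟨a, ha_sum, ha⟩ := Nat.sInf_mem (⟨_, a₀, rfl, ha₀⟩ :
      {d | ∃ a, ∑ i, a i = d ∧ IsPrimeColonExponent v a}.Nonempty)
    rw [← ha_sum]
    calc sInf {d | ∃ b, ∑ i, b i = d ∧ IsPrimeColonExponent (sgnExp v) b}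
        ≤ ∑ i, sgnFloor v a i := Nat.sInf_le ⟨sgnFloor v a, rfl, ha.sgnFloor h0⟩
      _ ≤ ∑ i, a i := Finset.sum_le_sum fun i _ => sgnFloor_le i

end MonIdeal

/-- **Signature invariants of monomial ideals** (Theorem: v-number).
Let `I` be a monomial ideal of `R = K[x_1,…,x_n]` of height at least `2`, with minimal
monomial generating set `G(I) = {x^{v_1},…,x^{v_q}}`.  Then `v(sgn(I)) ≤ v(I)`. -/
theorem vnumber_sgn_le_vnumber (K : Type) [Field K] (n q : ℕ)
    (v : Fin q → Fin n →₀ ℕ) (hv : AntichainFam v)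
    (I : Ideal (MvPolynomial (Fin n) K)) (hI : I = monIdeal K v)
    (hht : (2 : ℕ∞) ≤ heightOf I) :
    vNumber K n (monIdeal K (sgnExp v)) ≤ vNumber K n I := by
  subst hI
  exact vnumber_sgn_le_vnumber_general K v (exists_apply_eq_zero_of_two_le_heightOf hht)
end
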